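/- arXiv:2409.00553 — 6 statements merged into one kernel-verified Lean document; each statement's English description precedes it below -/
import Mathlib

section
/- Suppose ν_{f*|s} has finite second moment for each s ∈ 𝒮. If a measurable map f : ℝ^d × 𝒮 → ℝ^k satisfies distributional parity, i.e. ν_{f|s} is the same probability measure ν for every s ∈ 𝒮 (equivalently U(f) = 0), and ν has finite second moment, then E‖f*(X,S) − f(X,S)‖₂² ≥ min_{ν'} Σ_{s∈𝒮} p_s W₂²(ν_{f*|s}, ν') = U(f*). In particular the infimum of R(f) over all f with U(f) = 0 is at least U(f*). -/
open MeasureTheory ProbabilityTheory ENNReal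

noncomputable section

abbrev Euc (k : ℕ) : Type := EuclideanSpace ℝ (Fin k)

/-- Squared Wasserstein-2 distance between measures on `ℝ^k`,
as the infimum over couplings of the expected squared Euclidean distance. -/
def W2sq {k : ℕ} (μ ν : Measure (Euc k)) : ℝ≥0∞ :=
  ⨅ γ ∈ {γ : Measure (Euc k × Euc k) |
      γ.map Prod.fst = μ ∧ γ.map Prod.snd = ν},
    ∫⁻ p, (‖p.1 - p.2‖₊ : ℝ≥0∞) ^ 2 ∂γ

/-- The law of `f (X, S)` conditional on `S = s`. -/
def condLaw {Ω : Type*} [MeasurableSpace Ω] {d k m : ℕ} (P : Measure Ω)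
    (X : Ω → Euc d) (S : Ω → Fin m) (f : Euc d → Fin m → Euc k) (s : Fin m) :
    Measure (Euc k) :=
  (ProbabilityTheory.cond P {ω | S ω = s}).map fun ω => f (X ω) (S ω)

/-- Finite second moment functional. -/
def secondMoment {k : ℕ} (μ : Measure (Euc k)) : ℝ≥0∞ :=
  ∫⁻ y, (‖y‖₊ : ℝ≥0∞) ^ 2 ∂μ

/-- The unfairness measure `U(f)`: the infimum over probability measures `ν` of the
weighted sum of squared Wasserstein-2 distances of the group-conditional laws to `ν`. -/
def unfairness {Ω : Type*} [MeasurableSpace Ω] {d k m : ℕ} (P : Measure Ω)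
    (X : Ω → Euc d) (S : Ω → Fin m) (f : Euc d → Fin m → Euc k) : ℝ≥0∞ :=
  ⨅ ν ∈ {ν : Measure (Euc k) | IsProbabilityMeasure ν},
    ∑ s : Fin m, P {ω | S ω = s} * W2sq (condLaw P X S f s) ν

/-- The risk `R(f) = E ‖f*(X,S) - f(X,S)‖²`. -/
def risk {Ω : Type*} [MeasurableSpace Ω] {d k m : ℕ} (P : Measure Ω)
    (X : Ω → Euc d) (S : Ω → Fin m) (fstar f : Euc d → Fin m → Euc k) : ℝ≥0∞ :=
  ∫⁻ ω, (‖fstar (X ω) (S ω) - f (X ω) (S ω)‖₊ : ℝ≥0∞) ^ 2 ∂P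

/-- If `f` satisfies distributional parity, i.e. all its group-conditional
laws equal a common probability measure `ν` with finite second moment, then
`R(f) = E‖f*(X,S) - f(X,S)‖² ≥ min_ν' Σ_s p_s W₂²(ν_{f*|s}, ν') = U(f*)`. -/
theorem risk_ge_unfairness_of_parity {d k m : ℕ} {Ω : Type*} [MeasurableSpace Ω]
    (P : Measure Ω) [IsProbabilityMeasure P]
    (X : Ω → Euc d) (S : Ω → Fin m) (hX : Measurable X) (hS : Measurable S)
    (hps : ∀ s : Fin m, 0 < P {ω | S ω = s})
    (fstar f : Euc d → Fin m → Euc k)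
    (hfstar : Measurable fun ω => fstar (X ω) (S ω))
    (hf : Measurable fun ω => f (X ω) (S ω))
    (hmomstar : ∀ s : Fin m, secondMoment (condLaw P X S fstar s) < ⊤)
    (ν : Measure (Euc k)) (hν : IsProbabilityMeasure ν)
    (hνmom : secondMoment ν < ⊤)
    (hparity : ∀ s : Fin m, condLaw P X S f s = ν) :
    unfairness P X S fstar ≤ risk P X S fstar f := by
  have hmS : ∀ s : Fin m, MeasurableSet {ω | S ω = s} := fun s => hS (measurableSet_singleton s)
  have key : ∀ s : Fin m, P {ω | S ω = s} * W2sq (condLaw P X S fstar s) ν ≤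
      ∫⁻ ω in {ω | S ω = s}, (‖fstar (X ω) (S ω) - f (X ω) (S ω)‖₊ : ℝ≥0∞) ^ 2 ∂P := by
    intro s
    have hpair : Measurable fun ω => (fstar (X ω) (S ω), f (X ω) (S ω)) := hfstar.prodMk hf
    have h1 : W2sq (condLaw P X S fstar s) ν ≤
        ∫⁻ p, (‖p.1 - p.2‖₊ : ℝ≥0∞) ^ 2
          ∂((ProbabilityTheory.cond P {ω | S ω = s}).map
            fun ω => (fstar (X ω) (S ω), f (X ω) (S ω))) := by
      unfold W2sq
      refine iInf₂_le _ ⟨?_, ?_⟩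
      · rw [Measure.map_map measurable_fst hpair]
        rfl
      · rw [Measure.map_map measurable_snd hpair, ← hparity s]
        rfl
    rw [lintegral_map (by fun_prop) hpair] at h1
    refine (mul_le_mul_right h1 _).trans ?_
    rw [ProbabilityTheory.cond, lintegral_smul_measure, smul_eq_mul, ← mul_assoc,
      ENNReal.mul_inv_cancel (hps s).ne' (measure_ne_top _ _), one_mul]
  unfold unfairness risk
  refine (iInf₂_le ν hν).trans ((Finset.sum_le_sum fun s _ => key s).trans ?_)
  have hU : (⋃ s ∈ (Finset.univ : Finset (Fin m)), {ω | S ω = s}) = Set.univ := by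
    ext ω
    simp
  rw [← lintegral_biUnion_finset _ (fun s _ => hmS s), hU, setLIntegral_univ]
  intro s _ t _ hst
  refine Set.disjoint_left.2 fun ω h1 h2 => hst ?_
  exact (show S ω = s from h1).symm.trans h2

end
end

section
/- (Theorem 1) Suppose that for each s ∈ 𝒮 the conditional law ν_{f*|s} is absolutely continuous with respect to Lebesgue measure on ℝ^k and has finite second moment. Then min_{f : U(f)=0} E‖f*(X,S) − f(X,S)‖₂² = min_ν Σ_{s∈𝒮} p_s W₂²(ν_{f*|s}, ν) = U(f*). Moreover, if ν₀ minimizes ν ↦ Σ_{s∈𝒮} p_s W₂²(ν_{f*|s}, ν) and T_{f*|s,ν₀} : ℝ^k → ℝ^k denotes the optimal transport map from ν_{f*|s} to ν₀, then f₀(x,s) := T_{f*|s,ν₀}(f*(x,s)) attains the minimum on the left-hand side, and the law of f₀(X,S) is ν₀. -/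
open MeasureTheory ProbabilityTheory ENNReal

noncomputable section

lemma aux_W2sq_self {k : ℕ} (ν : Measure (Euc k)) : W2sq ν ν = 0 := by
  have hm : Measurable (fun x : Euc k => (x, x)) := by fun_prop
  refine le_antisymm ?_ zero_le
  refine (iInf₂_le (ν.map fun x => (x, x)) ⟨?_, ?_⟩).trans ?_
  rotate_left
  · rw [Measure.map_map measurable_fst hm]
    exact Measure.map_id
  · rw [Measure.map_map measurable_snd hm]
    exact Measure.map_id
  · rw [lintegral_map (by fun_prop) hm]
    simp

lemma aux_pointwise {k : ℕ} (δ : NNReal) (hδ : 0 < δ) (x y z : Euc k) :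
    (‖x - z‖₊ : ℝ≥0∞) ^ 2 ≤ ((1 + δ : NNReal) : ℝ≥0∞) * (‖x - y‖₊ : ℝ≥0∞) ^ 2
      + ((1 + δ⁻¹ : NNReal) : ℝ≥0∞) * (‖y - z‖₊ : ℝ≥0∞) ^ 2 := by
  norm_cast
  rw [← NNReal.coe_le_coe]
  push_cast
  have h := norm_sub_le_norm_sub_add_norm_sub x y z
  have h0 := norm_nonneg (x - z)
  have hd : (0 : ℝ) < δ := hδ
  generalize ‖x - y‖ = a at *
  generalize ‖y - z‖ = b at *
  have h1 : ‖x - z‖ ^ 2 ≤ (a + b) ^ 2 := by gcongr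
  refine h1.trans ?_
  have h2 : (1 + (δ : ℝ)) * a ^ 2 + (1 + (δ : ℝ)⁻¹) * b ^ 2 - (a + b) ^ 2
      = (δ : ℝ)⁻¹ * (δ * a - b) ^ 2 := by
    field_simp
    ring
  have h3 : 0 ≤ (δ : ℝ)⁻¹ * (δ * a - b) ^ 2 := by positivity
  linarith

lemma aux_glue {k : ℕ} (δ : NNReal) (hδ : 0 < δ) (γ₁ : Measure (Euc k × Euc k))
    [IsProbabilityMeasure γ₁] (ν : Measure (Euc k)) :
    W2sq (γ₁.map Prod.fst) ν ≤
      ((1 + δ : NNReal) : ℝ≥0∞) * ∫⁻ p, (‖p.1 - p.2‖₊ : ℝ≥0∞) ^ 2 ∂γ₁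
      + ((1 + δ⁻¹ : NNReal) : ℝ≥0∞) * W2sq (γ₁.map Prod.snd) ν := by
  conv_rhs => rw [W2sq, iInf_subtype',
    ENNReal.mul_iInf_of_ne (by simp) (by simp), ENNReal.add_iInf]
  refine le_iInf ?_
  rintro ⟨γ₂, h1, h2⟩
  have hp : IsProbabilityMeasure (γ₁.map Prod.snd) :=
    Measure.isProbabilityMeasure_map measurable_snd.aemeasurable
  have hp2 : IsProbabilityMeasure γ₂ := by
    constructor
    have := hp.measure_univ
    rw [← h1, Measure.map_apply measurable_fst MeasurableSet.univ] at this
    simpa using this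
  let κ : Kernel (Euc k × Euc k) (Euc k) := γ₂.condKernel.comap Prod.snd measurable_snd
  let G : Measure ((Euc k × Euc k) × Euc k) := γ₁ ⊗ₘ κ
  have hG1 : G.map Prod.fst = γ₁ := Measure.fst_compProd γ₁ κ
  have hG2 : G.map (fun q => (q.1.2, q.2)) = γ₂ := by
    have hd : γ₂.fst ⊗ₘ γ₂.condKernel = γ₂ := γ₂.disintegrate γ₂.condKernel
    have hm : Measurable (fun q : (Euc k × Euc k) × Euc k => (q.1.2, q.2)) := by fun_prop
    refine Measure.ext_of_lintegral _ fun f hf => ?_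
    rw [lintegral_map hf hm, show (∫⁻ q, f (q.1.2, q.2) ∂(γ₁ ⊗ₘ κ)) = _ from Measure.lintegral_compProd (hf.comp hm)]
    conv_rhs => rw [← hd, Measure.lintegral_compProd hf, Measure.fst, h1,
      lintegral_map (by fun_prop) measurable_snd]
    rfl
  have hm13 : Measurable (fun q : (Euc k × Euc k) × Euc k => (q.1.1, q.2)) := by fun_prop
  have hm23 : Measurable (fun q : (Euc k × Euc k) × Euc k => (q.1.2, q.2)) := by fun_prop
  refine (iInf₂_le (G.map fun q => (q.1.1, q.2)) ⟨?_, ?_⟩).trans ?_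
  rotate_left
  · rw [Measure.map_map measurable_fst hm13, ← hG1, Measure.map_map measurable_fst measurable_fst]
    rfl
  · rw [Measure.map_map measurable_snd hm13, ← h2, ← hG2, Measure.map_map measurable_snd hm23]
    rfl
  · rw [lintegral_map (by fun_prop) hm13]
    simp only
    conv_rhs => rw [← hG1, ← hG2]
    rw [lintegral_map (by fun_prop) hm23, lintegral_map (by fun_prop) measurable_fst,
      ← lintegral_const_mul _ (by fun_prop), ← lintegral_const_mul _ (by fun_prop),
      ← lintegral_add_left (by fun_prop)]
    exact lintegral_mono fun q => aux_pointwise δ hδ _ _ _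

lemma aux_total {Ω : Type*} [MeasurableSpace Ω] {m : ℕ} (P : Measure Ω) [IsProbabilityMeasure P]
    (S : Ω → Fin m) (hS : Measurable S) (g : Ω → ℝ≥0∞) :
    ∫⁻ ω, g ω ∂P = ∑ s, P {ω | S ω = s} * ∫⁻ ω, g ω ∂(ProbabilityTheory.cond P {ω | S ω = s}) := by
  have h := sum_meas_smul_cond_fiber hS P
  conv_lhs => rw [← h]
  rw [lintegral_finsetSum_measure]
  refine Finset.sum_congr rfl fun s _ => ?_
  rw [lintegral_smul_measure]
  rfl

lemma aux_lower {d k m : ℕ} {Ω : Type*} [MeasurableSpace Ω]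
    (P : Measure Ω) [IsProbabilityMeasure P]
    (X : Ω → Euc d) (S : Ω → Fin m) (hX : Measurable X) (hS : Measurable S)
    (hps : ∀ s : Fin m, 0 < P {ω | S ω = s})
    (fstar f : Euc d → Fin m → Euc k)
    (hfstar : Measurable fun p : Euc d × Fin m => fstar p.1 p.2)
    (hf : Measurable fun p : Euc d × Fin m => f p.1 p.2)
    (hU : unfairness P X S f = 0) :
    unfairness P X S fstar ≤ risk P X S fstar f := by
  have m1 : Measurable fun ω => fstar (X ω) (S ω) := hfstar.comp (hX.prodMk hS)
  have m2 : Measurable fun ω => f (X ω) (S ω) := hf.comp (hX.prodMk hS)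
  have m12 := m1.prodMk m2
  have key : ∀ δ : NNReal, 0 < δ →
      unfairness P X S fstar ≤ ((1 + δ : NNReal) : ℝ≥0∞) * risk P X S fstar f := by
    intro δ hδ
    have h : unfairness P X S fstar ≤ ((1 + δ : NNReal) : ℝ≥0∞) * risk P X S fstar f
        + ((1 + δ⁻¹ : NNReal) : ℝ≥0∞) * unfairness P X S f := by
      conv_rhs => rw [unfairness, iInf_subtype',
        ENNReal.mul_iInf_of_ne (by simp) (by simp), ENNReal.add_iInf]
      refine le_iInf ?_
      rintro ⟨ν, hν⟩
      refine (iInf₂_le ν hν).trans ?_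
      rw [risk, aux_total P S hS, Finset.mul_sum, Finset.mul_sum, ← Finset.sum_add_distrib]
      refine Finset.sum_le_sum fun s _ => ?_
      have : IsProbabilityMeasure (ProbabilityTheory.cond P {ω | S ω = s}) :=
        cond_isProbabilityMeasure (hps s).ne'
      have hpr : IsProbabilityMeasure ((ProbabilityTheory.cond P {ω | S ω = s}).map
          fun ω => (fstar (X ω) (S ω), f (X ω) (S ω))) :=
        Measure.isProbabilityMeasure_map m12.aemeasurable
      have hg := aux_glue δ hδ ((ProbabilityTheory.cond P {ω | S ω = s}).map
          fun ω => (fstar (X ω) (S ω), f (X ω) (S ω))) ν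
      rw [Measure.map_map measurable_fst m12, Measure.map_map measurable_snd m12,
        lintegral_map (by fun_prop) m12] at hg
      calc _ ≤ _ := mul_le_mul_right hg (P {ω | S ω = s})
        _ = _ := by
          rw [mul_add, mul_left_comm, mul_left_comm (P {ω | S ω = s})]
          rfl
    simpa [hU] using h
  have ht : Filter.Tendsto (fun n : ℕ => ((1 + ((n : NNReal) + 1)⁻¹ : NNReal) : ℝ≥0∞)
      * risk P X S fstar f) Filter.atTop (nhds (1 * risk P X S fstar f)) := by
    refine ENNReal.Tendsto.mul_const ?_ (Or.inl one_ne_zero)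
    have : Filter.Tendsto (fun n : ℕ => 1 + ((n : NNReal) + 1)⁻¹) Filter.atTop (nhds (1 + 0)) := by
      refine Filter.Tendsto.const_add _ ?_
      simpa using tendsto_one_div_add_atTop_nhds_zero_nat (𝕜 := NNReal)
    simpa using ENNReal.tendsto_coe.2 this
  rw [one_mul] at ht
  exact ge_of_tendsto' ht fun n => key _ (by positivity)

/-- Theorem 1: If each conditional law `ν_{f*|s}` is absolutely continuous
w.r.t. Lebesgue measure and has finite second moment, then the minimal risk among exactly
fair models equals `U(f*) = min_ν Σ_s p_s W₂²(ν_{f*|s}, ν)`, which is attained at the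
barycenter `ν₀`; moreover `f₀(x,s) := T_{f*|s,ν₀}(f*(x,s))` attains the minimum and its
law is `ν₀`. -/
theorem optimal_fair_projection {d k m : ℕ} {Ω : Type*} [MeasurableSpace Ω]
    (P : Measure Ω) [IsProbabilityMeasure P]
    (X : Ω → Euc d) (S : Ω → Fin m) (hX : Measurable X) (hS : Measurable S)
    (hps : ∀ s : Fin m, 0 < P {ω | S ω = s})
    (fstar : Euc d → Fin m → Euc k)
    (hfstar : Measurable fun p : Euc d × Fin m => fstar p.1 p.2)
    (hac : ∀ s : Fin m, condLaw P X S fstar s ≪ (volume : Measure (Euc k)))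
    (hmom : ∀ s : Fin m, secondMoment (condLaw P X S fstar s) < ⊤)
    -- `ν₀` is a minimizer of `ν ↦ Σ_s p_s W₂²(ν_{f*|s}, ν)`, i.e. a Wasserstein barycenter
    (ν₀ : Measure (Euc k)) (hν₀ : IsProbabilityMeasure ν₀)
    (hν₀min : ∀ ν : Measure (Euc k), IsProbabilityMeasure ν →
      ∑ s : Fin m, P {ω | S ω = s} * W2sq (condLaw P X S fstar s) ν₀
        ≤ ∑ s : Fin m, P {ω | S ω = s} * W2sq (condLaw P X S fstar s) ν)
    -- `T s` is the optimal transport map from `ν_{f*|s}` to `ν₀`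
    (T : Fin m → Euc k → Euc k) (hT : ∀ s, Measurable (T s))
    (hTpush : ∀ s : Fin m, (condLaw P X S fstar s).map (T s) = ν₀)
    (hTopt : ∀ s : Fin m, W2sq (condLaw P X S fstar s) ν₀
      = ∫⁻ z, (‖z - T s z‖₊ : ℝ≥0∞) ^ 2 ∂(condLaw P X S fstar s)) :
    -- the attained barycenter value equals `U(f*)`
    (∑ s : Fin m, P {ω | S ω = s} * W2sq (condLaw P X S fstar s) ν₀
        = unfairness P X S fstar)
    -- the minimal risk over exactly fair measurable models equals `U(f*)`
    ∧ (⨅ f : {f : Euc d → Fin m → Euc k //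
          Measurable (fun p : Euc d × Fin m => f p.1 p.2) ∧ unfairness P X S f = 0},
        risk P X S fstar f.1) = unfairness P X S fstar
    -- `f₀` attains this minimum:
    ∧ risk P X S fstar (fun x s => T s (fstar x s)) = unfairness P X S fstar
    ∧ unfairness P X S (fun x s => T s (fstar x s)) = 0
    -- and the law of `f₀(X,S)` is `ν₀`
    ∧ P.map (fun ω => T (S ω) (fstar (X ω) (S ω))) = ν₀ := by
  have m1 : Measurable fun ω => fstar (X ω) (S ω) := hfstar.comp (hX.prodMk hS)
  have hf0 : Measurable (fun p : Euc d × Fin m => T p.2 (fstar p.1 p.2)) := by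
    have hT' : Measurable (fun q : Euc k × Fin m => T q.2 q.1) :=
      measurable_from_prod_countable_left fun s => hT s
    exact hT'.comp (hfstar.prodMk measurable_snd)
  have m2 : Measurable fun ω => T (S ω) (fstar (X ω) (S ω)) := hf0.comp (hX.prodMk hS)
  have hae : ∀ s, ∀ᵐ ω ∂(ProbabilityTheory.cond P {ω | S ω = s}), S ω = s := fun s =>
    ae_cond_mem (hS (measurableSet_singleton s))
  have hA : ∑ s : Fin m, P {ω | S ω = s} * W2sq (condLaw P X S fstar s) ν₀
      = unfairness P X S fstar :=
    le_antisymm (le_iInf₂ fun ν hν => hν₀min ν hν) (iInf₂_le ν₀ hν₀)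
  have hlaw : ∀ s, condLaw P X S (fun x s => T s (fstar x s)) s = ν₀ := by
    intro s
    rw [← hTpush s, condLaw, condLaw, Measure.map_map (hT s) m1]
    refine Measure.map_congr ?_
    filter_upwards [hae s] with ω hω
    simp [hω]
  have hrisk : risk P X S fstar (fun x s => T s (fstar x s)) = unfairness P X S fstar := by
    rw [← hA, risk, aux_total P S hS]
    refine Finset.sum_congr rfl fun s _ => ?_
    have hTs := hT s
    rw [hTopt s, condLaw, lintegral_map (by fun_prop) m1]
    congr 1
    refine lintegral_congr_ae ?_
    filter_upwards [hae s] with ω hω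
    simp [hω]
  have hfair : unfairness P X S (fun x s => T s (fstar x s)) = 0 := by
    refine le_antisymm ((iInf₂_le ν₀ hν₀).trans ?_) zero_le
    simp [hlaw, aux_W2sq_self]
  refine ⟨hA, le_antisymm ?_ ?_, hrisk, hfair, ?_⟩
  · refine iInf_le_of_le ⟨fun x s => T s (fstar x s), hf0, hfair⟩ ?_
    exact hrisk.le
  · exact le_iInf fun f => aux_lower P X S hX hS hps fstar f.1 hfstar f.2.1 f.2.2
  · refine Measure.ext_of_lintegral _ fun g hg => ?_
    rw [lintegral_map hg m2, aux_total P S hS]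
    have h1 : ∀ s, ∫⁻ ω, g (T (S ω) (fstar (X ω) (S ω)))
        ∂(ProbabilityTheory.cond P {ω | S ω = s}) = ∫⁻ y, g y ∂ν₀ := by
      intro s
      rw [← hlaw s, condLaw, lintegral_map hg m2]
    simp only [h1]
    rw [← Finset.sum_mul]
    have h2 := aux_total P S hS (fun _ => 1)
    have h3 : ∀ s, ProbabilityTheory.cond P {ω | S ω = s} Set.univ = 1 := fun s =>
      (cond_isProbabilityMeasure (hps s).ne').measure_univ
    simp only [lintegral_const, one_mul, h3, mul_one, measure_univ] at h2
    rw [← h2, one_mul]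

end
end

section
/- (Proposition 1) Suppose ν_{f*|s} has a density and finite second moment for each s ∈ 𝒮. Let ν₀ be a minimizer of ν ↦ Σ_{s∈𝒮} p_s W₂²(ν_{f*|s}, ν) and let f₀(x,s) := T_{f*|s,ν₀}(f*(x,s)), where T_{f*|s,ν₀} is the optimal transport map from ν_{f*|s} to ν₀. Then for every α ∈ [0,1], the function f_α(x,s) := √α · f*(x,s) + (1−√α) · f₀(x,s) is an optimal solution (up to a set of measure zero) of the problem: minimize R(f) = E‖f*(X,S) − f(X,S)‖₂² over measurable f subject to U(f) ≤ α · U(f*). -/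
open MeasureTheory ProbabilityTheory ENNReal

noncomputable section

lemma W2sq_le_of_map {k : ℕ} {Ω : Type*} [MeasurableSpace Ω] (Q : Measure Ω)
    {g h : Ω → Euc k} (hg : Measurable g) (hh : Measurable h) :
    W2sq (Q.map g) (Q.map h) ≤ ∫⁻ ω, (‖g ω - h ω‖₊ : ℝ≥0∞) ^ 2 ∂Q := by
  have hgh : Measurable fun ω => (g ω, h ω) := hg.prodMk hh
  refine (iInf₂_le (Q.map fun ω => (g ω, h ω)) ⟨?_, ?_⟩).trans_eq ?_
  · rw [lintegral_map (by fun_prop) hgh]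
  · rw [Measure.map_map measurable_fst hgh]; rfl
  · rw [Measure.map_map measurable_snd hgh]; rfl

lemma sq_ineq {k : ℕ} (x y z : Euc k) {a b : ℝ} (ha : 0 < a) (hb : 0 < b) (hab : a + b = 1) :
    (‖x - z‖₊ : ℝ≥0∞) ^ 2 ≤ ENNReal.ofReal a⁻¹ * (‖x - y‖₊ : ℝ≥0∞) ^ 2
      + ENNReal.ofReal b⁻¹ * (‖y - z‖₊ : ℝ≥0∞) ^ 2 := by
  have key : ‖x - z‖ ^ 2 ≤ a⁻¹ * ‖x - y‖ ^ 2 + b⁻¹ * ‖y - z‖ ^ 2 := by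
    have h1 : ‖x - z‖ ≤ ‖x - y‖ + ‖y - z‖ := norm_sub_le_norm_sub_add_norm_sub x y z
    have h2 : ‖x - z‖ ^ 2 ≤ (‖x - y‖ + ‖y - z‖) ^ 2 := by gcongr
    refine h2.trans ?_
    generalize ‖x - y‖ = u
    generalize ‖y - z‖ = v
    obtain rfl : b = 1 - a := by linarith
    have : a⁻¹ * u ^ 2 + (1 - a)⁻¹ * v ^ 2 - (u + v) ^ 2
        = ((1 - a) * u - a * v) ^ 2 / (a * (1 - a)) := by
      have := ha.ne'
      have := hb.ne'
      field_simp
      ring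
    have h3 : 0 ≤ ((1 - a) * u - a * v) ^ 2 / (a * (1 - a)) := by positivity
    linarith
  have e : ∀ w : Euc k, (‖w‖₊ : ℝ≥0∞) ^ 2 = ENNReal.ofReal (‖w‖ ^ 2) := by
    intro w
    rw [ENNReal.ofReal_pow (norm_nonneg _), ofReal_norm]; rfl
  rw [e, e, e, ← ENNReal.ofReal_mul (by positivity), ← ENNReal.ofReal_mul (by positivity),
    ← ENNReal.ofReal_add (by positivity) (by positivity)]
  exact ENNReal.ofReal_le_ofReal key

lemma exists_glue {k : ℕ} {Ω : Type*} [MeasurableSpace Ω] (Q : Measure Ω)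
    [IsProbabilityMeasure Q] {h : Ω → Euc k} (hh : Measurable h)
    (γ : Measure (Euc k × Euc k)) (hγ1 : γ.map Prod.fst = Q.map h) :
    ∃ π : Measure (Ω × Euc k), π.map Prod.fst = Q ∧ π.map (fun p => (h p.1, p.2)) = γ := by
  have : IsProbabilityMeasure γ := by
    constructor
    have : (γ.map Prod.fst) Set.univ = 1 := by
      rw [hγ1, Measure.map_apply hh MeasurableSet.univ]; simp
    rwa [Measure.map_apply measurable_fst MeasurableSet.univ] at this
  have hm2 : Measurable fun p : Ω × Euc k => (h p.1, p.2) := by fun_prop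
  refine ⟨Q ⊗ₘ (γ.condKernel.comap h hh), Measure.fst_compProd Q _, ?_⟩
  refine Measure.ext_of_lintegral _ fun F hF => ?_
  rw [lintegral_map hF hm2,
    Measure.lintegral_compProd (f := fun p : Ω × Euc k => F (h p.1, p.2)) (hF.comp hm2)]
  have h1 : ∫⁻ z, F z ∂γ = ∫⁻ x, ∫⁻ y, F (x, y) ∂(γ.condKernel x) ∂(Q.map h) := by
    rw [← hγ1]
    exact (congrArg (fun η => ∫⁻ z, F z ∂η) (γ.disintegrate γ.condKernel)).symm.trans
      (Measure.lintegral_compProd hF)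
  rw [h1, lintegral_map hF.lintegral_kernel_prod_right' hh]
  rfl

lemma W2sq_glue {k : ℕ} {Ω : Type*} [MeasurableSpace Ω] (Q : Measure Ω)
    [IsProbabilityMeasure Q] {g h : Ω → Euc k} (hg : Measurable g) (hh : Measurable h)
    (ν : Measure (Euc k)) {a b : ℝ} (ha : 0 < a) (hb : 0 < b) (hab : a + b = 1)
    (γ : Measure (Euc k × Euc k)) (hγ1 : γ.map Prod.fst = Q.map h) (hγ2 : γ.map Prod.snd = ν) :
    W2sq (Q.map g) ν ≤ ENNReal.ofReal a⁻¹ * ∫⁻ ω, (‖g ω - h ω‖₊ : ℝ≥0∞) ^ 2 ∂Q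
      + ENNReal.ofReal b⁻¹ * ∫⁻ p, (‖p.1 - p.2‖₊ : ℝ≥0∞) ^ 2 ∂γ := by
  obtain ⟨π, hfst, hglue⟩ := exists_glue Q hh γ hγ1
  have hm2 : Measurable fun p : Ω × Euc k => (h p.1, p.2) := by fun_prop
  have hgl : ∫⁻ p, (‖h p.1 - p.2‖₊ : ℝ≥0∞) ^ 2 ∂π = ∫⁻ p, (‖p.1 - p.2‖₊ : ℝ≥0∞) ^ 2 ∂γ := by
    conv_rhs => rw [← hglue]
    rw [lintegral_map (by fun_prop) hm2]
  have hgf : ∫⁻ p, (‖g p.1 - h p.1‖₊ : ℝ≥0∞) ^ 2 ∂π = ∫⁻ ω, (‖g ω - h ω‖₊ : ℝ≥0∞) ^ 2 ∂Q := by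
    conv_rhs => rw [← hfst]
    rw [lintegral_map (by fun_prop) measurable_fst]
  have e1 : π.map (fun p => g p.1) = Q.map g := by
    conv_rhs => rw [← hfst]
    rw [Measure.map_map hg measurable_fst]; rfl
  have e2 : π.map (fun p => p.2) = ν := by
    rw [← hγ2]
    conv_rhs => rw [← hglue]
    rw [Measure.map_map measurable_snd hm2]; rfl
  rw [← e1]
  conv_lhs => rw [← e2]
  have m1 : Measurable fun p : Ω × Euc k => g p.1 := hg.comp measurable_fst
  have m2 : Measurable fun p : Ω × Euc k => h p.1 := hh.comp measurable_fst
  have step1 := W2sq_le_of_map π m1 (measurable_snd (α := Ω) (β := Euc k))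
  have step2 : ∫⁻ p : Ω × Euc k, (‖g p.1 - p.2‖₊ : ℝ≥0∞) ^ 2 ∂π
      ≤ ∫⁻ p : Ω × Euc k, (ENNReal.ofReal a⁻¹ * (‖g p.1 - h p.1‖₊ : ℝ≥0∞) ^ 2
        + ENNReal.ofReal b⁻¹ * (‖h p.1 - p.2‖₊ : ℝ≥0∞) ^ 2) ∂π :=
    lintegral_mono fun p => sq_ineq (g p.1) (h p.1) p.2 ha hb hab
  have m3 : Measurable fun p : Ω × Euc k => (‖g p.1 - h p.1‖₊ : ℝ≥0∞) ^ 2 :=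
    ((m1.sub m2).nnnorm.coe_nnreal_ennreal).pow_const 2
  have m4 : Measurable fun p : Ω × Euc k => (‖h p.1 - p.2‖₊ : ℝ≥0∞) ^ 2 :=
    ((m2.sub measurable_snd).nnnorm.coe_nnreal_ennreal).pow_const 2
  rw [lintegral_add_left (m3.const_mul _), lintegral_const_mul _ m3,
    lintegral_const_mul _ m4, hgf, hgl] at step2
  exact step1.trans step2

lemma W2sq_triangle {k : ℕ} {Ω : Type*} [MeasurableSpace Ω] (Q : Measure Ω)
    [IsProbabilityMeasure Q] {g h : Ω → Euc k} (hg : Measurable g) (hh : Measurable h)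
    (ν : Measure (Euc k)) {a b : ℝ} (ha : 0 < a) (hb : 0 < b) (hab : a + b = 1) :
    W2sq (Q.map g) ν ≤ ENNReal.ofReal a⁻¹ * ∫⁻ ω, (‖g ω - h ω‖₊ : ℝ≥0∞) ^ 2 ∂Q
      + ENNReal.ofReal b⁻¹ * W2sq (Q.map h) ν := by
  have hb0 : ENNReal.ofReal b⁻¹ ≠ 0 := by
    simpa using hb
  conv_rhs => rw [W2sq, iInf_subtype', ENNReal.mul_iInf_of_ne hb0 ENNReal.ofReal_ne_top,
    ENNReal.add_iInf]
  refine le_iInf fun γ => ?_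
  exact W2sq_glue Q hg hh ν ha hb hab γ.1 γ.2.1 γ.2.2

lemma real_step {U R α : ℝ} (hU : 0 ≤ U) (hR : 0 ≤ R) (h0 : 0 ≤ α) (h1 : α ≤ 1)
    (h : ∀ a b : ℝ, 0 < a → 0 < b → a + b = 1 → U ≤ a⁻¹ * R + b⁻¹ * (α * U)) :
    (1 - √α) ^ 2 * U ≤ R := by
  rcases eq_or_lt_of_le h0 with rfl | h0
  · simp only [Real.sqrt_zero, sub_zero, one_pow, one_mul]
    refine le_of_forall_pos_lt_add fun ε hε => ?_
    have hp : 0 < U + 1 + ε := by positivity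
    have hlt : ε / (U + 1 + ε) < 1 := by rw [div_lt_one hp]; linarith
    have hb : 0 < ε / (U + 1 + ε) := by positivity
    have := h (1 - ε / (U + 1 + ε)) (ε / (U + 1 + ε)) (by linarith) hb (by ring)
    rw [zero_mul, mul_zero, add_zero, ← div_eq_inv_mul, le_div_iff₀ (by linarith)] at this
    have h3 : U * (ε / (U + 1 + ε)) < ε := by
      rw [← mul_div_assoc, div_lt_iff₀ hp]; nlinarith
    nlinarith
  rcases eq_or_lt_of_le h1 with rfl | h1
  · simpa using hR
  obtain ⟨r, hr, rfl⟩ : ∃ r, 0 < r ∧ α = r ^ 2 :=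
    ⟨√α, Real.sqrt_pos.2 h0, (Real.sq_sqrt h0.le).symm⟩
  rw [Real.sqrt_sq hr.le]
  have hr1 : r < 1 := by nlinarith
  have := h (1 - r) r (by linarith) hr (by ring)
  have e : r⁻¹ * (r ^ 2 * U) = r * U := by field_simp
  rw [e] at this
  have h4 : (1 - r) * U ≤ R / (1 - r) := by rw [div_eq_inv_mul]; linarith
  rw [le_div_iff₀ (by linarith)] at h4
  linarith

/-- Proposition 1: With `ν₀` a Wasserstein barycenter of the conditional
laws of `f*` and `f₀(x,s) = T_{f*|s,ν₀}(f*(x,s))`, for every `α ∈ [0,1]` the model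
`f_α := √α f* + (1-√α) f₀` is an optimal solution of
`min R(f)` subject to `U(f) ≤ α U(f*)`: it is feasible and its risk is at most the risk
of every feasible measurable model. -/
theorem geodesic_interpolation_optimal {d k m : ℕ} {Ω : Type*} [MeasurableSpace Ω]
    (P : Measure Ω) [IsProbabilityMeasure P]
    (X : Ω → Euc d) (S : Ω → Fin m) (hX : Measurable X) (hS : Measurable S)
    (hps : ∀ s : Fin m, 0 < P {ω | S ω = s})
    (fstar : Euc d → Fin m → Euc k)
    (hfstar : Measurable fun p : Euc d × Fin m => fstar p.1 p.2)
    (hac : ∀ s : Fin m, condLaw P X S fstar s ≪ (volume : Measure (Euc k)))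
    (hmom : ∀ s : Fin m, secondMoment (condLaw P X S fstar s) < ⊤)
    (ν₀ : Measure (Euc k)) (hν₀ : IsProbabilityMeasure ν₀)
    (hν₀min : ∀ ν : Measure (Euc k), IsProbabilityMeasure ν →
      ∑ s : Fin m, P {ω | S ω = s} * W2sq (condLaw P X S fstar s) ν₀
        ≤ ∑ s : Fin m, P {ω | S ω = s} * W2sq (condLaw P X S fstar s) ν)
    (T : Fin m → Euc k → Euc k) (hT : ∀ s, Measurable (T s))
    (hTpush : ∀ s : Fin m, (condLaw P X S fstar s).map (T s) = ν₀)
    (hTopt : ∀ s : Fin m, W2sq (condLaw P X S fstar s) ν₀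
      = ∫⁻ z, (‖z - T s z‖₊ : ℝ≥0∞) ^ 2 ∂(condLaw P X S fstar s))
    (α : ℝ) (hα0 : 0 ≤ α) (hα1 : α ≤ 1) :
    -- feasibility of `f_α`:
    unfairness P X S
        (fun x s => Real.sqrt α • fstar x s + (1 - Real.sqrt α) • T s (fstar x s))
      ≤ ENNReal.ofReal α * unfairness P X S fstar
    -- optimality of `f_α` among feasible measurable models:
    ∧ ∀ f : Euc d → Fin m → Euc k,
        Measurable (fun p : Euc d × Fin m => f p.1 p.2) →
        unfairness P X S f ≤ ENNReal.ofReal α * unfairness P X S fstar →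
        risk P X S fstar
            (fun x s => Real.sqrt α • fstar x s + (1 - Real.sqrt α) • T s (fstar x s))
          ≤ risk P X S fstar f := by
  have hms : ∀ f : Euc d → Fin m → Euc k, Measurable (fun p : Euc d × Fin m => f p.1 p.2) →
      Measurable fun ω => f (X ω) (S ω) := fun f hf => hf.comp (hX.prodMk hS)
  have hg := hms fstar hfstar
  have hQ : ∀ s, IsProbabilityMeasure (ProbabilityTheory.cond P {ω | S ω = s}) := fun s =>
    cond_isProbabilityMeasure (hps s).ne'
  have hprob : ∀ s, IsProbabilityMeasure (condLaw P X S fstar s) := fun s =>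
    Measure.isProbabilityMeasure_map hg.aemeasurable
  have hsum : ∀ F : Ω → ℝ≥0∞, ∑ s, P {ω | S ω = s} *
      ∫⁻ ω, F ω ∂(ProbabilityTheory.cond P {ω | S ω = s}) = ∫⁻ ω, F ω ∂P := by
    intro F
    conv_rhs => rw [← sum_meas_smul_cond_fiber hS P]
    rw [lintegral_finsetSum_measure]
    simp only [lintegral_smul_measure]
    rfl
  have hae : ∀ s, ∀ᵐ ω ∂(ProbabilityTheory.cond P {ω | S ω = s}), S ω = s := fun s =>
    ae_cond_mem (hS (measurableSet_singleton s))
  -- value of `U(f*)`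
  have hU : unfairness P X S fstar
      = ∑ s : Fin m, P {ω | S ω = s} * W2sq (condLaw P X S fstar s) ν₀ :=
    le_antisymm (iInf₂_le ν₀ hν₀) (le_iInf₂ fun ν hν => hν₀min ν hν)
  have hUtop : unfairness P X S fstar ≠ ⊤ := by
    refine ne_top_of_le_ne_top ?_ (iInf₂_le (Measure.dirac (0 : Euc k))
      (by exact Measure.dirac.isProbabilityMeasure))
    refine ENNReal.sum_ne_top.2 fun s _ => ENNReal.mul_ne_top (measure_ne_top _ _) ?_
    have h1 := W2sq_le_of_map (condLaw P X S fstar s) (g := id) (h := fun _ => (0 : Euc k))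
      measurable_id measurable_const
    have := hprob s
    rw [Measure.map_id, Measure.map_const, measure_univ, one_smul] at h1
    refine ne_top_of_le_ne_top (hmom s).ne (h1.trans_eq ?_)
    simp [secondMoment]
  set r := Real.sqrt α with hr
  have hr0 : 0 ≤ r := Real.sqrt_nonneg _
  have hr1 : r ≤ 1 := Real.sqrt_le_one.2 hα1
  have hrα : r ^ 2 = α := Real.sq_sqrt hα0
  have hsc : ∀ (c : ℝ) (w : Euc k),
      (‖c • w‖₊ : ℝ≥0∞) ^ 2 = ENNReal.ofReal (c ^ 2) * (‖w‖₊ : ℝ≥0∞) ^ 2 := by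
    intro c w
    rw [nnnorm_smul, ENNReal.coe_mul, mul_pow, ← sq_abs c, ENNReal.ofReal_pow (abs_nonneg c)]
    congr 2
    exact (Real.enorm_eq_ofReal_abs c)
  have hopt : ∀ s, ∫⁻ ω, (‖fstar (X ω) (S ω) - T s (fstar (X ω) (S ω))‖₊ : ℝ≥0∞) ^ 2
      ∂(ProbabilityTheory.cond P {ω | S ω = s}) = W2sq (condLaw P X S fstar s) ν₀ := by
    intro s
    have := hT s
    rw [hTopt s, condLaw, lintegral_map (by fun_prop) hg]
  constructor
  · rw [hU, Finset.mul_sum]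
    refine (iInf₂_le ν₀ hν₀).trans (Finset.sum_le_sum fun s _ => ?_)
    rw [mul_left_comm]
    gcongr
    have hTs := hT s
    have hlaw : condLaw P X S (fun x s => r • fstar x s + (1 - r) • T s (fstar x s)) s
        = (ProbabilityTheory.cond P {ω | S ω = s}).map fun ω =>
          r • fstar (X ω) (S ω) + (1 - r) • T s (fstar (X ω) (S ω)) := by
      refine Measure.map_congr ?_
      filter_upwards [hae s] with ω hω
      simp only [hω]
    have hν : (ProbabilityTheory.cond P {ω | S ω = s}).map
        (fun ω => T s (fstar (X ω) (S ω))) = ν₀ := by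
      rw [← hTpush s, condLaw, Measure.map_map hTs hg]; rfl
    rw [hlaw]
    conv_lhs => rw [← hν]
    refine (W2sq_le_of_map _ (by fun_prop) (by fun_prop)).trans_eq ?_
    rw [← hopt s, ← hrα, ← lintegral_const_mul _ (by fun_prop)]
    refine lintegral_congr fun ω => ?_
    rw [← hsc]
    congr 4
    module
  · intro f hf hfU
    have hh := hms f hf
    have hrisk : risk P X S fstar (fun x s => r • fstar x s + (1 - r) • T s (fstar x s))
        = ENNReal.ofReal ((1 - r) ^ 2) * unfairness P X S fstar := by
      rw [hU, risk, ← hsum, Finset.mul_sum]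
      refine Finset.sum_congr rfl fun s _ => ?_
      have hTs := hT s
      rw [mul_left_comm, ← hopt s, ← lintegral_const_mul (ENNReal.ofReal ((1 - r) ^ 2)) (by fun_prop)]
      congr 1
      refine lintegral_congr_ae ?_
      filter_upwards [hae s] with ω hω
      simp only [hω]
      rw [← hsc]
      congr 4
      module
    rw [hrisk]
    by_cases hRtop : risk P X S fstar f = ⊤
    · rw [hRtop]; exact le_top
    have key : ∀ a b : ℝ, 0 < a → 0 < b → a + b = 1 → unfairness P X S fstar ≤
        ENNReal.ofReal a⁻¹ * risk P X S fstar f + ENNReal.ofReal b⁻¹ * unfairness P X S f := by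
      intro a b ha hb hab
      have hb0 : ENNReal.ofReal b⁻¹ ≠ 0 := by simpa using hb
      conv_rhs => rw [unfairness, iInf_subtype', ENNReal.mul_iInf_of_ne hb0 ENNReal.ofReal_ne_top,
        ENNReal.add_iInf]
      refine le_iInf fun ⟨ν, hν⟩ => ?_
      refine (iInf₂_le ν hν).trans ?_
      rw [risk, ← hsum, Finset.mul_sum, Finset.mul_sum, ← Finset.sum_add_distrib]
      refine Finset.sum_le_sum fun s _ => ?_
      have := hQ s
      rw [mul_left_comm, mul_left_comm (ENNReal.ofReal b⁻¹), ← mul_add]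
      gcongr
      exact W2sq_triangle _ hg hh ν ha hb hab
    have hreal := real_step (U := (unfairness P X S fstar).toReal)
      (R := (risk P X S fstar f).toReal) ENNReal.toReal_nonneg ENNReal.toReal_nonneg hα0 hα1 ?_
    · rw [← ENNReal.ofReal_toReal hUtop, ← ENNReal.ofReal_toReal hRtop,
        ← ENNReal.ofReal_mul (by positivity)]
      exact ENNReal.ofReal_le_ofReal hreal
    · intro a b ha hb hab
      have h1 : unfairness P X S fstar ≤ ENNReal.ofReal a⁻¹ * risk P X S fstar f
          + ENNReal.ofReal b⁻¹ * (ENNReal.ofReal α * unfairness P X S fstar) :=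
        (key a b ha hb hab).trans (by gcongr)
      rw [← ENNReal.ofReal_toReal hUtop, ← ENNReal.ofReal_toReal hRtop,
        ← ENNReal.ofReal_mul hα0, ← ENNReal.ofReal_mul (by positivity),
        ← ENNReal.ofReal_mul (by positivity),
        ← ENNReal.ofReal_add (by positivity) (by positivity)] at h1
      exact (ENNReal.ofReal_le_ofReal_iff (by positivity)).1 h1

end
end

section
/- Fix a group s ∈ 𝒮 and use the Gaussian kernel K(z) = (2π)^{−1/2} exp(−‖z‖²). Let ν_{f̄(D_s)} denote the law of f̄ evaluated at a training point of group s drawn uniformly from D_s (over both the uniform draw and the randomness of T_s). Let Δ_min := min_{i≠j} ‖u_i^s − u_j^s‖₂ > 0 and let Δ_max := max over pairs of support points ξ, ξ' of ν̃₀ of ‖ξ − ξ'‖₂. Then W₂²(ν_{f̄(D_s)}, ν̃₀) ≤ n_s² · exp(−Δ_min²/h²) · Δ_max². -/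
open MeasureTheory ProbabilityTheory ENNReal

noncomputable section

/-- The Gaussian kernel `K(z) = (2π)^{-1/2} exp(-‖z‖²)`. -/
def gaussK {k : ℕ} (z : Euc k) : ℝ :=
  (Real.sqrt (2 * Real.pi))⁻¹ * Real.exp (-(‖z‖ ^ 2))

/-- Single-group Nadaraya–Watson extrapolation of the random transport map `T`:
`a ↦ Σ_i K((a - u_i)/h) T(u_i) / Σ_j K((a - u_j)/h)`, with randomness `θ`. -/
def nwMap {k : ℕ} {Θ : Type*} {n : ℕ} (u : Fin n → Euc k) (T : Fin n → Θ → Euc k)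
    (h : ℝ) (θ : Θ) (a : Euc k) : Euc k :=
  (∑ j : Fin n, gaussK (h⁻¹ • (a - u j)))⁻¹ •
    ∑ i : Fin n, gaussK (h⁻¹ • (a - u i)) • T i θ

/-- The uniform probability measure on `Fin n`. -/
def unifFin (n : ℕ) : Measure (Fin n) :=
  (n : ℝ≥0∞)⁻¹ • ∑ i : Fin n, Measure.dirac i

lemma gaussK_pos' {k : ℕ} (z : Euc k) : 0 < gaussK z := by
  unfold gaussK
  have := Real.pi_pos
  positivity

lemma nw_bound {k : ℕ} {Θ : Type*} {n : ℕ} (u : Fin n → Euc k)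
    (T : Fin n → Θ → Euc k) (h : ℝ) (hh : 0 < h) (θ : Θ) (Δmin D : ℝ) (hΔ0 : 0 < Δmin)
    (hΔ : ∀ i j : Fin n, i ≠ j → Δmin ≤ ‖u i - u j‖) (hD0 : 0 ≤ D)
    (hD : ∀ i j, ‖T i θ - T j θ‖ ≤ D) (i : Fin n) :
    ‖nwMap u T h θ (u i) - T i θ‖ ≤ n * Real.exp (-(Δmin ^ 2 / h ^ 2)) * D := by
  unfold nwMap
  set K : Fin n → ℝ := fun l => gaussK (h⁻¹ • (u i - u l)) with hK
  set S : ℝ := ∑ j, K j with hS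
  set c : ℝ := (Real.sqrt (2 * Real.pi))⁻¹ with hc
  have hc0 : 0 < c := by
    have := Real.pi_pos
    positivity
  have hKi : K i = c := by simp [hK, gaussK, hc]
  have hKpos : ∀ l, 0 < K l := fun l => gaussK_pos' _
  have hSc : c ≤ S := by
    rw [← hKi]
    exact Finset.single_le_sum (fun l _ => (hKpos l).le) (Finset.mem_univ i)
  have hS0 : 0 < S := lt_of_lt_of_le hc0 hSc
  have e1 : S⁻¹ • ∑ l, K l • T l θ - T i θ = S⁻¹ • ∑ l, K l • (T l θ - T i θ) := by
    simp only [smul_sub, Finset.sum_sub_distrib]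
    rw [← Finset.sum_smul, ← hS, smul_smul S⁻¹ S, inv_mul_cancel₀ hS0.ne', one_smul]
  have e2 : ∀ l, ‖K l • (T l θ - T i θ)‖ ≤ c * Real.exp (-(Δmin ^ 2 / h ^ 2)) * D := by
    intro l
    by_cases hl : l = i
    · subst hl
      simp only [sub_self, smul_zero, norm_zero]
      positivity
    · rw [norm_smul, Real.norm_of_nonneg (hKpos l).le]
      have h1 : K l ≤ c * Real.exp (-(Δmin ^ 2 / h ^ 2)) := by
        simp only [hK, gaussK]
        rw [norm_smul, norm_inv, Real.norm_of_nonneg hh.le, mul_pow, inv_pow]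
        have h2 := hΔ i l (Ne.symm hl)
        rw [div_eq_inv_mul]
        gcongr
      exact mul_le_mul h1 (hD l i) (norm_nonneg _) (by positivity)
  change ‖S⁻¹ • ∑ l, K l • T l θ - T i θ‖ ≤ _
  rw [e1, norm_smul, norm_inv, Real.norm_of_nonneg hS0.le]
  have e3 : ‖∑ l, K l • (T l θ - T i θ)‖ ≤ n * (c * Real.exp (-(Δmin ^ 2 / h ^ 2)) * D) := by
    refine (norm_sum_le _ _).trans ((Finset.sum_le_sum fun l _ => e2 l).trans ?_)
    simp
  rw [inv_mul_le_iff₀ hS0]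
  refine e3.trans ?_
  have : 0 ≤ n * Real.exp (-(Δmin ^ 2 / h ^ 2)) * D := by positivity
  nlinarith [mul_le_mul_of_nonneg_right hSc this]

lemma unif_prod {Θ : Type*} [MeasurableSpace Θ] (Q : Measure Θ) [IsProbabilityMeasure Q]
    (n : ℕ) : (unifFin n).prod Q = (n : ℝ≥0∞)⁻¹ • ∑ i : Fin n, Q.map (Prod.mk i) := by
  unfold unifFin
  ext s hs
  rw [Measure.prod_apply hs]
  simp only [lintegral_smul_measure, lintegral_finsetSum_measure, lintegral_dirac,
    Measure.smul_apply, Measure.finsetSum_apply]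
  congr 1
  refine Finset.sum_congr rfl fun i _ => ?_
  rw [Measure.map_apply measurable_prodMk_left hs]

lemma discrete_law {k : ℕ} (μ : Measure (Euc k)) [IsProbabilityMeasure μ] {m : ℕ}
    (ξ : Fin m → Euc k) (hξ : Function.Injective ξ) (hsum : ∑ j, μ {ξ j} = 1) :
    ∑ j, μ {ξ j} • Measure.dirac (ξ j) = μ := by
  classical
  have htot : (∑ j, μ {ξ j} • Measure.dirac (ξ j)) Set.univ = 1 := by
    simp [Measure.finsetSum_apply, hsum]
  have : IsFiniteMeasure (∑ j, μ {ξ j} • Measure.dirac (ξ j)) :=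
    ⟨by rw [htot]; exact ENNReal.one_lt_top⟩
  refine Measure.eq_of_le_of_measure_univ_eq ?_ ?_
  · refine Measure.le_intro fun s hs _ => ?_
    simp only [Measure.finsetSum_apply, Measure.smul_apply, Measure.dirac_apply' _ hs,
      smul_eq_mul, Set.indicator_apply, Pi.one_apply, mul_ite, mul_one, mul_zero]
    rw [← Finset.sum_filter, ← Finset.sum_image (f := fun x => μ {x}) (g := ξ) hξ.injOn,
      sum_measure_singleton]
    refine measure_mono ?_
    intro x hx
    simp only [Finset.coe_image, Finset.coe_filter, Finset.mem_univ, true_and, Set.mem_image,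
      Set.mem_ofPred_eq] at hx
    obtain ⟨j, hj, rfl⟩ := hx
    exact hj
  · rw [htot, measure_univ]

lemma discrete_ae {k : ℕ} (μ : Measure (Euc k)) {m : ℕ}
    (ξ : Fin m → Euc k) (h : ∑ j, μ {ξ j} • Measure.dirac (ξ j) = μ) :
    ∀ᵐ x ∂μ, x ∈ Set.range ξ := by
  rw [← h, ae_iff]
  simp [Measure.finsetSum_apply]

set_option maxHeartbeats 1000000

/-- for a fixed group, with `ν_{f̄(D_s)}` the law of the Nadaraya–Watson
post-processed output at a uniformly drawn training point (over both the uniform draw and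
the randomness of the transport map `T`), and `ν̃₀ = Σ_j w_j δ_{ξ_j}` the approximate
barycenter, one has `W₂²(ν_{f̄(D_s)}, ν̃₀) ≤ n² exp(-Δ_min²/h²) Δ_max²`. -/
theorem W2sq_nw_training_to_barycenter {k : ℕ} {Θ : Type*} [MeasurableSpace Θ]
    (Q : Measure Θ) [IsProbabilityMeasure Q]
    (n : ℕ) (hn : 0 < n) (u : Fin n → Euc k) (hu : Function.Injective u)
    (n0 : ℕ) (ξ : Fin n0 → Euc k) (hξ : Function.Injective ξ)
    (w : Fin n0 → ℝ≥0∞) (hw : ∑ j : Fin n0, w j = 1)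
    (γ : Fin n → Fin n0 → ℝ≥0∞)
    (hγrow : ∀ i, ∑ j : Fin n0, γ i j = ((n : ℝ≥0∞))⁻¹)
    (hγcol : ∀ j, ∑ i : Fin n, γ i j = w j)
    (hγopt : ∀ γ' : Fin n → Fin n0 → ℝ≥0∞,
      (∀ i, ∑ j : Fin n0, γ' i j = ((n : ℝ≥0∞))⁻¹) →
      (∀ j, ∑ i : Fin n, γ' i j = w j) →
      ∑ i : Fin n, ∑ j : Fin n0, (‖u i - ξ j‖₊ : ℝ≥0∞) ^ 2 * γ i j
        ≤ ∑ i : Fin n, ∑ j : Fin n0, (‖u i - ξ j‖₊ : ℝ≥0∞) ^ 2 * γ' i j)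
    (T : Fin n → Θ → Euc k) (hT : ∀ i, Measurable (T i))
    (hTdist : ∀ i j, Q {θ | T i θ = ξ j} = γ i j * (n : ℝ≥0∞))
    (h : ℝ) (hh : 0 < h)
    -- `Δ_min = min_{i ≠ j} ‖u_i - u_j‖ > 0` and `Δ_max = max_{j,j'} ‖ξ_j - ξ_j'‖`
    (Δmin Δmax : ℝ) (hΔmin0 : 0 < Δmin)
    (hΔmin : ∀ i j : Fin n, i ≠ j → Δmin ≤ ‖u i - u j‖)
    (hΔmax : ∀ j j' : Fin n0, ‖ξ j - ξ j'‖ ≤ Δmax) :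
    W2sq (((unifFin n).prod Q).map (fun q => nwMap u T h q.2 (u q.1)))
        (∑ j : Fin n0, w j • Measure.dirac (ξ j))
      ≤ (n : ℝ≥0∞) ^ 2 * ENNReal.ofReal (Real.exp (-(Δmin ^ 2 / h ^ 2))) *
          ENNReal.ofReal (Δmax ^ 2) := by
  have hn0 : (n : ℝ≥0∞) ≠ 0 := by exact_mod_cast hn.ne'
  have hnt : (n : ℝ≥0∞) ≠ ⊤ := ENNReal.natCast_ne_top n
  have hμ : ∀ i, IsProbabilityMeasure (Q.map (T i)) := fun i =>
    Measure.isProbabilityMeasure_map (hT i).aemeasurable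
  have hmass : ∀ i j, Q.map (T i) {ξ j} = γ i j * n := fun i j => by
    rw [Measure.map_apply (hT i) (measurableSet_singleton _), ← hTdist i j]
    rfl
  have hlaw : ∀ i, ∑ j, Q.map (T i) {ξ j} • Measure.dirac (ξ j) = Q.map (T i) := fun i => by
    refine discrete_law _ ξ hξ ?_
    simp only [hmass]
    rw [← Finset.sum_mul, hγrow, ENNReal.inv_mul_cancel hn0 hnt]
  have hae : ∀ᵐ θ ∂Q, ∀ i, T i θ ∈ Set.range ξ := by
    rw [ae_all_iff]
    intro i
    exact ae_of_ae_map (hT i).aemeasurable (discrete_ae _ ξ (hlaw i))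
  have hF : Measurable (fun q : Fin n × Θ => nwMap u T h q.2 (u q.1)) := by
    refine measurable_from_prod_countable_right fun i => ?_
    unfold nwMap
    dsimp only
    have key : Measurable (fun y => ∑ l, gaussK (h⁻¹ • (u i - u l)) • T l y) := by
      apply Finset.measurable_sum
      intro l _
      exact (hT l).const_smul (gaussK (h⁻¹ • (u i - u l)))
    exact key.const_smul (∑ j, gaussK (h⁻¹ • (u i - u j)))⁻¹
  have hG : Measurable (fun q : Fin n × Θ => T q.1 q.2) :=
    measurable_from_prod_countable_right fun i => hT i
  have hFG := hF.prodMk hG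
  unfold W2sq
  refine le_trans (iInf₂_le (((unifFin n).prod Q).map
    (fun q => (nwMap u T h q.2 (u q.1), T q.1 q.2))) (And.intro ?m1 ?m2)) ?m3
  case m1 =>
    rw [Measure.map_map measurable_fst hFG]
    rfl
  case m2 =>
    rw [Measure.map_map measurable_snd hFG]
    change ((unifFin n).prod Q).map (fun q => T q.1 q.2) = _
    rw [unif_prod, Measure.map_smul, Measure.map_finset_sum' hG.aemeasurable]
    have : ∀ i, (Q.map (Prod.mk i)).map (fun q : Fin n × Θ => T q.1 q.2)
        = ∑ j, (γ i j * n) • Measure.dirac (ξ j) := by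
      intro i
      rw [Measure.map_map hG measurable_prodMk_left]
      change Q.map (T i) = _
      rw [← hlaw i]
      simp only [hmass]
    simp only [this]
    rw [Finset.sum_comm, Finset.smul_sum]
    refine Finset.sum_congr rfl fun j _ => ?_
    rw [← Finset.sum_smul, ← Finset.sum_mul, hγcol, smul_smul, mul_comm (w j), ← mul_assoc,
      ENNReal.inv_mul_cancel hn0 hnt, one_mul]
  case m3 =>
    have hm : Measurable (fun p : Euc k × Euc k => (‖p.1 - p.2‖₊ : ℝ≥0∞) ^ 2) := by fun_prop
    rw [lintegral_map hm hFG, unif_prod, lintegral_smul_measure, lintegral_finsetSum_measure]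
    have hpt : ∀ i, ∀ᵐ θ ∂Q, (‖nwMap u T h θ (u i) - T i θ‖₊ : ℝ≥0∞) ^ 2 ≤
        (n : ℝ≥0∞) ^ 2 * ENNReal.ofReal (Real.exp (-(Δmin ^ 2 / h ^ 2))) *
          ENNReal.ofReal (Δmax ^ 2) := by
      intro i
      filter_upwards [hae] with θ hθ
      have hD : ∀ a b, ‖T a θ - T b θ‖ ≤ Δmax := by
        intro a b
        obtain ⟨j, hj⟩ := hθ a
        obtain ⟨j', hj'⟩ := hθ b
        rw [← hj, ← hj']
        exact hΔmax j j'
      have hD0 : 0 ≤ Δmax := (norm_nonneg _).trans (hD i i)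
      have hb := nw_bound u T h hh θ Δmin Δmax hΔmin0 hΔmin hD0 hD i
      have hr : ‖nwMap u T h θ (u i) - T i θ‖ ^ 2 ≤
          (n : ℝ) ^ 2 * Real.exp (-(Δmin ^ 2 / h ^ 2)) * Δmax ^ 2 := by
        have h1 : Real.exp (-(Δmin ^ 2 / h ^ 2)) ≤ 1 := by
          rw [Real.exp_le_one_iff]
          have : 0 ≤ Δmin ^ 2 / h ^ 2 := by positivity
          linarith
        have h0 := (Real.exp_pos (-(Δmin ^ 2 / h ^ 2))).le
        calc _ ≤ (n * Real.exp (-(Δmin ^ 2 / h ^ 2)) * Δmax) ^ 2 := by gcongr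
          _ = (n : ℝ) ^ 2 * (Real.exp (-(Δmin ^ 2 / h ^ 2)) ^ 2) * Δmax ^ 2 := by ring
          _ ≤ _ := by
            gcongr
            nlinarith
      have e := ENNReal.ofReal_le_ofReal hr
      rw [ENNReal.ofReal_mul (by positivity), ENNReal.ofReal_mul (by positivity),
        ENNReal.ofReal_pow (norm_nonneg _), ENNReal.ofReal_pow (Nat.cast_nonneg _),
        ENNReal.ofReal_natCast, ofReal_norm] at e
      exact e
    have hi : ∀ i, ∫⁻ q, (‖nwMap u T h q.2 (u q.1) - T q.1 q.2‖₊ : ℝ≥0∞) ^ 2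
        ∂(Q.map (Prod.mk i)) ≤ (n : ℝ≥0∞) ^ 2 *
          ENNReal.ofReal (Real.exp (-(Δmin ^ 2 / h ^ 2))) * ENNReal.ofReal (Δmax ^ 2) := by
      intro i
      have hm2 : Measurable (fun q : Fin n × Θ =>
          (‖nwMap u T h q.2 (u q.1) - T q.1 q.2‖₊ : ℝ≥0∞) ^ 2) :=
        (hF.sub hG).nnnorm.coe_nnreal_ennreal.pow_const 2
      rw [lintegral_map hm2 measurable_prodMk_left]
      refine (lintegral_mono_ae (hpt i)).trans ?_
      simp
    rw [smul_eq_mul]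
    refine (mul_le_mul_right (Finset.sum_le_sum fun i _ => hi i) _).trans ?_
    rw [Finset.sum_const, Finset.card_univ, Fintype.card_fin, nsmul_eq_mul, ← mul_assoc,
      ENNReal.inv_mul_cancel hn0 hnt, one_mul]

end
end

section
/- Fix a group s ∈ 𝒮 and use the Gaussian kernel K(z) = (2π)^{−1/2} exp(−‖z‖²). Let Δ_min := min_{i≠j} ‖u_i^s − u_j^s‖₂ > 0 and Δ_max := max over pairs of support points ξ, ξ' of ν̃₀ of ‖ξ − ξ'‖₂. Then for every 1-Lipschitz function φ : ℝ^k → ℝ and every i ∈ {1,…,n_s}, | E[φ(T̃_s(u_i^s))] − E[φ(T_s(u_i^s))] | ≤ n_s · exp(−Δ_min²/(2h²)) · Δ_max, where T̃_s(u_i^s) := Σ_{j=1}^{n_s} K((u_i^s − u_j^s)/h) · T_s(u_j^s) / Σ_{l=1}^{n_s} K((u_i^s − u_l^s)/h) is the Nadaraya–Watson smoothing of the random transport map evaluated at the training point u_i^s (the expectations are over the randomness of T_s). -/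
open MeasureTheory ProbabilityTheory ENNReal

noncomputable section

theorem nw_aux_mem {k : ℕ} {Θ : Type*} [MeasurableSpace Θ]
    (Q : Measure Θ) [IsProbabilityMeasure Q] (n0 : ℕ) (ξ : Fin n0 → Euc k)
    (hξ : Function.Injective ξ) (T : Θ → Euc k) (hT : Measurable T)
    (hs : ∑ j, Q {θ | T θ = ξ j} = 1) : ∀ᵐ θ ∂Q, ∃ j, T θ = ξ j := by
  have hm : ∀ j, MeasurableSet {θ | T θ = ξ j} := fun j => hT (measurableSet_singleton (ξ j))
  have hU : MeasurableSet {θ | ∃ j, T θ = ξ j} := by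
    have : {θ | ∃ j, T θ = ξ j} = ⋃ j, {θ | T θ = ξ j} := by ext; simp
    rw [this]; exact MeasurableSet.iUnion hm
  have h1 : Q {θ | ∃ j, T θ = ξ j} = 1 := by
    have : {θ | ∃ j, T θ = ξ j} = ⋃ j, {θ | T θ = ξ j} := by ext; simp
    rw [this, measure_iUnion _ hm, tsum_fintype, hs]
    intro a b hab
    refine Set.disjoint_left.2 fun θ ha hb => hab (hξ ?_)
    have ha2 : T θ = ξ a := ha
    have hb2 : T θ = ξ b := hb
    exact ha2.symm.trans hb2
  exact (mem_ae_iff_prob_eq_one hU).2 h1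

theorem nw_aux_lip {k : ℕ} {Θ : Type*} [MeasurableSpace Θ]
    (Q : Measure Θ) [IsProbabilityMeasure Q] (φ : Euc k → ℝ)
    (hφ : ∀ a b : Euc k, |φ a - φ b| ≤ ‖a - b‖) (X : Θ → Euc k) (hX : Integrable X Q) :
    Integrable (fun θ => φ (X θ)) Q := by
  have hc : Continuous φ := by
    have : LipschitzWith 1 φ := LipschitzWith.of_dist_le_mul fun a b => by
      simpa [Real.dist_eq, dist_eq_norm] using hφ a b
    exact this.continuous
  refine Integrable.mono' ((integrable_const |φ 0|).add hX.norm)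
    (hc.comp_aestronglyMeasurable hX.aestronglyMeasurable) (Filter.Eventually.of_forall fun θ => ?_)
  have h1 := hφ (X θ) 0
  rw [sub_zero] at h1
  have h2 := abs_add_le (φ (X θ) - φ 0) (φ 0)
  rw [sub_add_cancel] at h2
  simp only [Pi.add_apply, Real.norm_eq_abs]
  linarith

theorem nw_aux_pt {k n : ℕ} {Θ : Type*} (u : Fin n → Euc k) (T : Fin n → Θ → Euc k) (θ : Θ)
    (h : ℝ) (hh : 0 < h) (Δmin Δmax : ℝ) (hΔmin0 : 0 < Δmin)
    (hΔmin : ∀ i j : Fin n, i ≠ j → Δmin ≤ ‖u i - u j‖)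
    (i : Fin n) (hb : ∀ j, ‖T j θ - T i θ‖ ≤ Δmax) :
    ‖nwMap u T h θ (u i) - T i θ‖ ≤ n * Real.exp (-(Δmin ^ 2 / (2 * h ^ 2))) * Δmax := by
  have hD : 0 ≤ Δmax := (norm_nonneg _).trans (hb i)
  set c : ℝ := (Real.sqrt (2 * Real.pi))⁻¹ with hc
  have hcpos : 0 < c := by rw [hc]; positivity
  set K : Fin n → ℝ := fun j => gaussK (h⁻¹ • (u i - u j)) with hK
  have hKpos : ∀ j, 0 < K j := fun j => by
    simp only [hK, gaussK]; positivity
  set S : ℝ := ∑ j, K j with hS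
  have hKi : K i = c := by simp [hK, gaussK, hc]
  have hSc : c ≤ S := hKi ▸ Finset.single_le_sum (fun j _ => (hKpos j).le) (Finset.mem_univ i)
  have hSpos : 0 < S := hcpos.trans_le hSc
  have hEq : nwMap u T h θ (u i) - T i θ = S⁻¹ • ∑ j, K j • (T j θ - T i θ) := by
    simp only [smul_sub, Finset.sum_sub_distrib, ← Finset.sum_smul]
    rw [← hS, smul_smul S⁻¹ S, inv_mul_cancel₀ hSpos.ne', one_smul]
    rfl
  have hterm : ∀ j, ‖K j • (T j θ - T i θ)‖ ≤ c * Real.exp (-(Δmin ^ 2 / (2 * h ^ 2))) * Δmax := by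
    intro j
    by_cases hij : i = j
    · subst hij
      simp only [sub_self, smul_zero, norm_zero]
      positivity
    · rw [norm_smul, Real.norm_of_nonneg (hKpos j).le]
      refine mul_le_mul ?_ (hb j) (norm_nonneg _) (by positivity)
      simp only [hK, gaussK]
      refine mul_le_mul_of_nonneg_left (Real.exp_le_exp.2 (neg_le_neg ?_)) hcpos.le
      rw [norm_smul, mul_pow, norm_inv, Real.norm_of_nonneg hh.le]
      have h1 : Δmin ^ 2 ≤ ‖u i - u j‖ ^ 2 := pow_le_pow_left₀ hΔmin0.le (hΔmin i j hij) 2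
      calc Δmin ^ 2 / (2 * h ^ 2) ≤ Δmin ^ 2 / h ^ 2 := by
            apply div_le_div_of_nonneg_left <;> nlinarith [sq_nonneg Δmin, pow_pos hh 2]
        _ = h⁻¹ ^ 2 * Δmin ^ 2 := by rw [inv_pow]; field_simp
        _ ≤ _ := mul_le_mul_of_nonneg_left h1 (by positivity)
  rw [hEq, norm_smul, norm_inv, Real.norm_of_nonneg hSpos.le]
  have h2 : ‖∑ j, K j • (T j θ - T i θ)‖ ≤
      n * (c * Real.exp (-(Δmin ^ 2 / (2 * h ^ 2))) * Δmax) := by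
    refine (norm_sum_le _ _).trans ((Finset.sum_le_sum fun j _ => hterm j).trans ?_)
    simp
  rw [inv_mul_le_iff₀ hSpos]
  refine h2.trans ?_
  calc n * (c * Real.exp (-(Δmin ^ 2 / (2 * h ^ 2))) * Δmax)
      = c * (n * Real.exp (-(Δmin ^ 2 / (2 * h ^ 2))) * Δmax) := by ring
    _ ≤ _ := mul_le_mul_of_nonneg_right hSc (by positivity)

/-- for every 1-Lipschitz `φ : ℝ^k → ℝ` and every training index `i`,
`|E[φ(T̃(u_i))] - E[φ(T(u_i))]| ≤ n exp(-Δ_min²/(2h²)) Δ_max`, where `T̃(u_i)` is the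
Nadaraya–Watson smoothing of the random transport map evaluated at `u_i` and the
expectations are over the randomness of `T`. -/
theorem nw_smoothing_expectation_close {k : ℕ} {Θ : Type*} [MeasurableSpace Θ]
    (Q : Measure Θ) [IsProbabilityMeasure Q]
    (n : ℕ) (hn : 0 < n) (u : Fin n → Euc k) (hu : Function.Injective u)
    (n0 : ℕ) (ξ : Fin n0 → Euc k) (hξ : Function.Injective ξ)
    (w : Fin n0 → ℝ≥0∞) (hw : ∑ j : Fin n0, w j = 1)
    (γ : Fin n → Fin n0 → ℝ≥0∞)
    (hγrow : ∀ i, ∑ j : Fin n0, γ i j = ((n : ℝ≥0∞))⁻¹)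
    (hγcol : ∀ j, ∑ i : Fin n, γ i j = w j)
    (hγopt : ∀ γ' : Fin n → Fin n0 → ℝ≥0∞,
      (∀ i, ∑ j : Fin n0, γ' i j = ((n : ℝ≥0∞))⁻¹) →
      (∀ j, ∑ i : Fin n, γ' i j = w j) →
      ∑ i : Fin n, ∑ j : Fin n0, (‖u i - ξ j‖₊ : ℝ≥0∞) ^ 2 * γ i j
        ≤ ∑ i : Fin n, ∑ j : Fin n0, (‖u i - ξ j‖₊ : ℝ≥0∞) ^ 2 * γ' i j)
    (T : Fin n → Θ → Euc k) (hT : ∀ i, Measurable (T i))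
    (hTdist : ∀ i j, Q {θ | T i θ = ξ j} = γ i j * (n : ℝ≥0∞))
    (h : ℝ) (hh : 0 < h)
    (Δmin Δmax : ℝ) (hΔmin0 : 0 < Δmin)
    (hΔmin : ∀ i j : Fin n, i ≠ j → Δmin ≤ ‖u i - u j‖)
    (hΔmax : ∀ j j' : Fin n0, ‖ξ j - ξ j'‖ ≤ Δmax)
    (φ : Euc k → ℝ) (hφ : ∀ a b : Euc k, |φ a - φ b| ≤ ‖a - b‖) :
    ∀ i : Fin n,
      |(∫ θ, φ (nwMap u T h θ (u i)) ∂Q) - (∫ θ, φ (T i θ) ∂Q)|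
        ≤ n * Real.exp (-(Δmin ^ 2 / (2 * h ^ 2))) * Δmax := by
  intro i
  have hn' : (n : ℝ≥0∞) ≠ 0 := by exact_mod_cast hn.ne'
  have hmem : ∀ᵐ θ ∂Q, ∀ j, ∃ l, T j θ = ξ l := by
    rw [ae_all_iff]
    intro j
    refine nw_aux_mem Q n0 ξ hξ (T j) (hT j) ?_
    simp only [hTdist]
    rw [← Finset.sum_mul, hγrow, ENNReal.inv_mul_cancel hn' (ENNReal.natCast_ne_top n)]
  have hTint : ∀ j, Integrable (T j) Q := by
    intro j
    refine Integrable.of_bound (hT j).aestronglyMeasurable (∑ l, ‖ξ l‖) ?_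
    filter_upwards [hmem] with θ hθ
    obtain ⟨l, hl⟩ := hθ j
    rw [hl]
    exact Finset.single_le_sum (f := fun l => ‖ξ l‖) (fun _ _ => norm_nonneg _) (Finset.mem_univ l)
  have hNint : Integrable (fun θ => nwMap u T h θ (u i)) Q := by
    unfold nwMap
    refine Integrable.smul (∑ j : Fin n, gaussK (h⁻¹ • (u i - u j)))⁻¹
      (integrable_finsetSum _ fun j _ => ?_)
    exact (hTint j).smul (gaussK (h⁻¹ • (u i - u j)))
  rw [← integral_sub (nw_aux_lip Q φ hφ _ hNint) (nw_aux_lip Q φ hφ _ (hTint i)),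
    ← Real.norm_eq_abs]
  refine (norm_integral_le_of_norm_le_const
    (C := n * Real.exp (-(Δmin ^ 2 / (2 * h ^ 2))) * Δmax) ?_).trans (by simp)
  filter_upwards [hmem] with θ hθ
  refine (hφ _ _).trans (nw_aux_pt u T θ h hh Δmin Δmax hΔmin0 hΔmin i fun j => ?_)
  obtain ⟨l, hl⟩ := hθ j
  obtain ⟨l', hl'⟩ := hθ i
  rw [hl, hl']
  exact hΔmax l l'
end
end

section
/- Let u_1, …, u_n ∈ ℝ^k and v_1, …, v_n ∈ ℝ^k, and let h > 0. Define the Nadaraya–Watson map G : ℝ^k → ℝ^k by G(ξ) := Σ_{i=1}^n exp(−‖ξ − u_i‖²/h²) v_i / Σ_{j=1}^n exp(−‖ξ − u_j‖²/h²). Then G is Lipschitz continuous with Lipschitz constant at most 2 · D_u · D_v / h², where D_u := max_{i,j} ‖u_i − u_j‖₂ and D_v := max_{i,j} ‖v_i − v_j‖₂. -/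
open MeasureTheory ENNReal

noncomputable section

/-- The Nadaraya–Watson kernel-regression map with Gaussian kernel:
`G(ξ) = Σ_i exp(-‖ξ - u_i‖²/h²) v_i / Σ_j exp(-‖ξ - u_j‖²/h²)`. -/
def nwGauss {k : ℕ} {n : ℕ} (u v : Fin n → Euc k) (h : ℝ) (ξ : Euc k) : Euc k :=
  (∑ j : Fin n, Real.exp (-(‖ξ - u j‖ ^ 2) / h ^ 2))⁻¹ •
    ∑ i : Fin n, Real.exp (-(‖ξ - u i‖ ^ 2) / h ^ 2) • v i

theorem nw_exp_diff (x y : ℝ) : |Real.exp x - Real.exp y| ≤ |x - y| * (Real.exp x + Real.exp y) := by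
  have key : ∀ a b : ℝ, Real.exp a - Real.exp b ≤ |a - b| * (Real.exp a + Real.exp b) := by
    intro a b
    have h1 := Real.add_one_le_exp (b - a)
    have h2 : Real.exp b = Real.exp a * Real.exp (b - a) := by
      rw [← Real.exp_add]; congr 1; ring
    have h3 : Real.exp a - Real.exp b ≤ (a - b) * Real.exp a := by
      rw [h2]; nlinarith [Real.exp_pos a]
    have h4 : (a - b) * Real.exp a ≤ |a - b| * Real.exp a :=
      mul_le_mul_of_nonneg_right (le_abs_self _) (Real.exp_pos a).le
    have h5 : 0 ≤ |a - b| * Real.exp b := mul_nonneg (abs_nonneg _) (Real.exp_pos b).le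
    linarith
  rw [abs_le]
  have h1 := key x y
  have h2 := key y x
  rw [abs_sub_comm y x] at h2
  constructor <;> linarith

theorem nw_sum_identity {E : Type*} [NormedAddCommGroup E] [NormedSpace ℝ E] {n : ℕ}
    (p q : Fin n → ℝ) (v : Fin n → E) (hP : (∑ i, p i) ≠ 0) (hQ : (∑ i, q i) ≠ 0) :
    (2 * ((∑ i, p i) * ∑ i, q i)) •
      ((∑ i, p i)⁻¹ • ∑ i, p i • v i - (∑ i, q i)⁻¹ • ∑ i, q i • v i) =
    ∑ i, ∑ j, (p i * q j - p j * q i) • (v i - v j) := by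
  have e1 : ∑ i, ∑ j, (p i * q j) • v i = (∑ i, q i) • ∑ i, p i • v i := by
    rw [Finset.smul_sum]
    refine Finset.sum_congr rfl fun i _ => ?_
    rw [← Finset.sum_smul, smul_smul, ← Finset.mul_sum, mul_comm]
  have e2 : ∑ i, ∑ j, (p j * q i) • v i = (∑ i, p i) • ∑ i, q i • v i := by
    rw [Finset.smul_sum]
    refine Finset.sum_congr rfl fun i _ => ?_
    rw [← Finset.sum_smul, smul_smul, ← Finset.sum_mul]
  have e3 : ∑ i, ∑ j, (p j * q i) • v j = (∑ i, q i) • ∑ i, p i • v i := by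
    rw [Finset.sum_comm, e1]
  have e4 : ∑ i, ∑ j, (p i * q j) • v j = (∑ i, p i) • ∑ i, q i • v i := by
    rw [Finset.sum_comm, e2]
  simp only [sub_smul, smul_sub, Finset.sum_sub_distrib, e1, e2, e3, e4, smul_smul]
  have c1 : 2 * ((∑ i, p i) * ∑ i, q i) * (∑ i, p i)⁻¹ = 2 * ∑ i, q i := by field_simp
  have c2 : 2 * ((∑ i, p i) * ∑ i, q i) * (∑ i, q i)⁻¹ = 2 * ∑ i, p i := by field_simp
  rw [c1, c2]
  module

/-- the Nadaraya–Watson map `G` is Lipschitz continuous with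
constant at most `2 D_u D_v / h²`, where `D_u` bounds the diameter of the `u_i` and
`D_v` bounds the diameter of the `v_i`. -/
theorem nwGauss_lipschitz {k : ℕ} (n : ℕ) (hn : 0 < n)
    (u v : Fin n → Euc k) (h : ℝ) (hh : 0 < h)
    (Du Dv : ℝ)
    (hDu : ∀ i j : Fin n, ‖u i - u j‖ ≤ Du)
    (hDv : ∀ i j : Fin n, ‖v i - v j‖ ≤ Dv) :
    ∀ ξ ξ' : Euc k,
      ‖nwGauss u v h ξ - nwGauss u v h ξ'‖ ≤ (2 * Du * Dv / h ^ 2) * ‖ξ - ξ'‖ := by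
  intro ξ ξ'
  haveI : Nonempty (Fin n) := ⟨⟨0, hn⟩⟩
  unfold nwGauss
  set p : Fin n → ℝ := fun i => Real.exp (-(‖ξ - u i‖ ^ 2) / h ^ 2) with hp
  set q : Fin n → ℝ := fun i => Real.exp (-(‖ξ' - u i‖ ^ 2) / h ^ 2) with hq
  have hP : 0 < ∑ i, p i := Finset.sum_pos (fun i _ => Real.exp_pos _) Finset.univ_nonempty
  have hQ : 0 < ∑ i, q i := Finset.sum_pos (fun i _ => Real.exp_pos _) Finset.univ_nonempty
  have hid := nw_sum_identity p q v hP.ne' hQ.ne'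
  change ‖(∑ i, p i)⁻¹ • ∑ i, p i • v i - (∑ i, q i)⁻¹ • ∑ i, q i • v i‖ ≤ _
  set P := ∑ i, p i with hPdef
  set Q := ∑ i, q i with hQdef
  set A : ℝ := 2 * Du / h ^ 2 * ‖ξ - ξ'‖ with hA
  have hDu0 : 0 ≤ Du := (norm_nonneg _).trans (hDu ⟨0, hn⟩ ⟨0, hn⟩)
  have hA0 : 0 ≤ A := by positivity
  have hterm : ∀ i j, ‖(p i * q j - p j * q i) • (v i - v j)‖
      ≤ A * Dv * (p i * q j + p j * q i) := by
    intro i j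
    have hpos : 0 ≤ p i * q j + p j * q i := by
      simp only [hp, hq]; positivity
    have h1 : |p i * q j - p j * q i| ≤ A * (p i * q j + p j * q i) := by
      have h2 := nw_exp_diff (-(‖ξ - u i‖ ^ 2) / h ^ 2 + -(‖ξ' - u j‖ ^ 2) / h ^ 2)
        (-(‖ξ - u j‖ ^ 2) / h ^ 2 + -(‖ξ' - u i‖ ^ 2) / h ^ 2)
      rw [Real.exp_add, Real.exp_add] at h2
      refine h2.trans (mul_le_mul_of_nonneg_right ?_ hpos)
      have h3 : -(‖ξ - u i‖ ^ 2) / h ^ 2 + -(‖ξ' - u j‖ ^ 2) / h ^ 2 -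
          (-(‖ξ - u j‖ ^ 2) / h ^ 2 + -(‖ξ' - u i‖ ^ 2) / h ^ 2)
          = 2 / h ^ 2 * inner ℝ (ξ - ξ') (u i - u j) := by
        simp only [norm_sub_sq_real, inner_sub_left, inner_sub_right]
        ring
      rw [h3, abs_mul, abs_of_nonneg (by positivity : (0 : ℝ) ≤ 2 / h ^ 2)]
      have h4 : |inner ℝ (ξ - ξ') (u i - u j)| ≤ ‖ξ - ξ'‖ * Du :=
        (abs_real_inner_le_norm _ _).trans
          (mul_le_mul_of_nonneg_left (hDu i j) (norm_nonneg _))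
      calc 2 / h ^ 2 * |inner ℝ (ξ - ξ') (u i - u j)| ≤ 2 / h ^ 2 * (‖ξ - ξ'‖ * Du) :=
            mul_le_mul_of_nonneg_left h4 (by positivity)
        _ = A := by rw [hA]; ring
    rw [norm_smul, Real.norm_eq_abs]
    calc _ ≤ A * (p i * q j + p j * q i) * Dv :=
          mul_le_mul h1 (hDv i j) (norm_nonneg _) (mul_nonneg hA0 hpos)
      _ = _ := by ring
  have hsum : ∑ i, ∑ j, A * Dv * (p i * q j + p j * q i) = A * Dv * (2 * (P * Q)) := by
    simp only [← Finset.mul_sum, Finset.sum_add_distrib, ← Finset.sum_mul]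
    rw [← hPdef, ← hQdef]; ring
  have hnorm := norm_sum_le_of_le Finset.univ
    (fun i _ => norm_sum_le_of_le Finset.univ (fun j _ => hterm i j))
  rw [← hid, hsum, norm_smul, Real.norm_eq_abs, abs_of_pos (by positivity), mul_comm] at hnorm
  have hfin := le_of_mul_le_mul_right hnorm (by positivity : 0 < 2 * (P * Q))
  refine hfin.trans (le_of_eq ?_)
  rw [hA]; ring

end
end
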